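/- Let X be a proper geodesic metric space and p ∈ X. Suppose there exist q ∈ X and two distinct local geodesics γ, σ : [0,1] → X joining p to q. If inj(p) < conj(X) or (L(γ)+L(σ))/2 < conj(X), then inj(p) ≤ (L(γ)+L(σ))/2. -/

import Mathlib

open Set Metric Topology Filter
open scoped ENNReal

noncomputable section

namespace InjSoul

/-- The unit interval `[0,1] ⊆ ℝ`. -/
abbrev I01 : Set ℝ := Set.Icc (0 : ℝ) 1

variable {X : Type*} [MetricSpace X]

/-- `0` as a point of `[0,1]`. -/
def pt0 : I01 := ⟨0, by norm_num⟩

/-- `1` as a point of `[0,1]`. -/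
def pt1 : I01 := ⟨1, by norm_num⟩

/-- `c : [0,1] → X` is a geodesic of speed (= length) `L`. -/
def IsGeod (c : C(I01, X)) (L : ℝ) : Prop :=
  0 ≤ L ∧ ∀ s t : I01, dist (c s) (c t) = L * |(s : ℝ) - (t : ℝ)|

/-- `γ : [0,1] → X` is a local geodesic of speed (= length) `L`. -/
def IsLocGeod (γ : C(I01, X)) (L : ℝ) : Prop :=
  0 ≤ L ∧ ∀ t : I01, ∃ ε > 0, ∀ s s' : I01,
    |(s : ℝ) - (t : ℝ)| < ε → |(s' : ℝ) - (t : ℝ)| < ε →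
      dist (γ s) (γ s') = L * |(s : ℝ) - (s' : ℝ)|

/-- `X` is a geodesic space: any two points are joined by a geodesic. -/
def GeodesicSpace (X : Type*) [MetricSpace X] : Prop :=
  ∀ x y : X, ∃ (c : C(I01, X)) (L : ℝ), IsGeod c L ∧ c pt0 = x ∧ c pt1 = y

/-- The cut locus of `p`: all points joined to `p` by at least two distinct geodesics. -/
def Cut (p : X) : Set X :=
  {q | ∃ (γ σ : C(I01, X)) (Lγ Lσ : ℝ), IsGeod γ Lγ ∧ IsGeod σ Lσ ∧
    γ pt0 = p ∧ γ pt1 = q ∧ σ pt0 = p ∧ σ pt1 = q ∧ γ ≠ σ}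

/-- The injectivity radius of `p`, an element of `[0,∞]` (`∞` if `Cut p = ∅`). -/
def inj (p : X) : ℝ≥0∞ := ⨅ q ∈ Cut p, edist p q

/-- The minimal cut locus of `p`: points `γ t₀`, `t₀ ∈ (0,1)`, on a nontrivial local geodesic
`γ` issuing in `p` such that `γ` is minimizing on `[0,t₀]` but on no larger interval `[0,t]`. -/
def MinCut (p : X) : Set X :=
  {q | ∃ (γ : C(I01, X)) (L : ℝ) (t₀ : ℝ) (ht₀ : t₀ ∈ Set.Ioo (0 : ℝ) 1),
      IsLocGeod γ L ∧ 0 < L ∧ γ pt0 = p ∧ γ ⟨t₀, Set.mem_Icc_of_Ioo ht₀⟩ = q ∧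
      dist p q = L * t₀ ∧
      ∀ t : ℝ, ∀ ht : t ∈ Set.Ioc t₀ 1,
        dist p (γ ⟨t, ⟨(ht₀.1.trans ht.1).le, ht.2⟩⟩) ≠ L * t}

/-- The minimal radius of `p`, an element of `[0,∞]` (`∞` if `MinCut p = ∅`). -/
def minRad (p : X) : ℝ≥0∞ := ⨅ q ∈ MinCut p, edist p q

/-- The space `X̃_p` of local geodesics issuing in `p` (including the constant map), viewed
as a subset of the continuous maps `C([0,1], X)` whose metric is the uniform metric `ρ`. -/
def LocGeodFrom (p : X) : Set C(I01, X) := {γ | (∃ L, IsLocGeod γ L) ∧ γ pt0 = p}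

/-- The endpoint map `exp_p : X̃_p → X`, `γ ↦ γ 1`. -/
def endpt : C(I01, X) → X := fun γ => γ pt1

/-- `γ 1` is conjugate to `p = γ 0` along the local geodesic `γ`: no neighborhood `U` of `γ`
in `X̃_p` is mapped homeomorphically onto its image by the endpoint map. -/
def ConjugateAlong (p : X) (γ : C(I01, X)) : Prop :=
  γ ∈ LocGeodFrom p ∧
    ¬ ∃ U : Set C(I01, X), U ⊆ LocGeodFrom p ∧ U ∈ 𝓝[LocGeodFrom p] γ ∧
      Topology.IsEmbedding (U.restrict endpt)

/-- The conjugate radius of `p`: the infimum of lengths of local geodesics issuing in `p`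
along which the endpoint is conjugate to `p` (`∞` if there are none). -/
def conjRad (p : X) : ℝ≥0∞ :=
  sInf {l | ∃ (γ : C(I01, X)) (L : ℝ), IsLocGeod γ L ∧ γ pt0 = p ∧
    ConjugateAlong p γ ∧ l = ENNReal.ofReal L}

/-- The conjugate radius of the space `X`. -/
def conjSpace (X : Type*) [MetricSpace X] : ℝ≥0∞ := ⨅ p : X, conjRad p

/-!
Below the injectivity and conjugate radii of `p`, a local geodesic issuing in `p` is a geodesic: the
set of times up to which it is minimizing is closed, and it is open because nearby geodesics, by
compactness and local injectivity of the endpoint map, can only be its own initial segments.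

Suppose now that half the sum of the lengths lies below both radii. If a local geodesic `γ` from `p`
to `q` had length `L > d(p, q)`, then its initial segment of length `R`, for `R` slightly larger
than `(d(p, q) + L) / 2`, would still be minimizing, whereas its endpoint can be reached from `p`
through `q` by a path of length at most `d(p, q) + (L - R) < R`. Hence both local geodesics are
geodesics to `q`, and they coincide since `d(p, q)` is smaller than the injectivity radius.
-/

section LocalGeodesics

variable {c γ : C(I01, X)} {L L' : ℝ}

lemma dist_add_dist_of_le_of_le {s u v : I01} (hsu : s ≤ u) (huv : u ≤ v) :
    dist s u + dist u v = dist s v := by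
  have hsu' : (s : ℝ) ≤ u := hsu
  have huv' : (u : ℝ) ≤ v := huv
  simp only [Subtype.dist_eq, Real.dist_eq]
  rw [abs_of_nonpos, abs_of_nonpos, abs_of_nonpos] <;> linarith

lemma IsGeod.isLocGeod (h : IsGeod c L) : IsLocGeod c L :=
  ⟨h.1, fun _ => ⟨1, one_pos, fun s s' _ _ => h.2 s s'⟩⟩

-- `pt0` and `pt1` are by definition the `0` and `1` of the monoid `[0,1]`; the latter are used here
-- and below because the multiplication of `[0,1]` and `simp` apply to them.
lemma IsGeod.dist_endpoints (h : IsGeod c L) : dist (c 0) (c 1) = L := by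
  simp [h.2]

lemma IsLocGeod.eventually_dist_eq (h : IsLocGeod γ L) (t : I01) :
    ∀ᶠ s in 𝓝 t, dist (γ t) (γ s) = L * dist t s := by
  obtain ⟨ε, hε, hγ⟩ := h.2 t
  filter_upwards [ball_mem_nhds t hε] with s hs
  exact hγ t s (by simpa using hε) hs

lemma IsLocGeod.length_unique (h : IsLocGeod γ L) (h' : IsLocGeod γ L') : L = L' := by
  have hevent : ∀ᶠ _ in 𝓝[≠] (0 : I01), L = L' := by
    filter_upwards [nhdsWithin_le_nhds (h.eventually_dist_eq 0),
      nhdsWithin_le_nhds (h'.eventually_dist_eq 0), self_mem_nhdsWithin] with s hs hs' hs0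
    exact mul_right_cancel₀ (dist_ne_zero.2 (Ne.symm hs0)) (hs.symm.trans hs')
  exact eventually_const.1 hevent

lemma IsLocGeod.dist_le (h : IsLocGeod γ L) (s t : I01) : dist (γ s) (γ t) ≤ L * dist s t := by
  wlog hst : s ≤ t generalizing s t
  · simpa only [dist_comm] using this t s (le_of_not_ge hst)
  suffices Icc s t ⊆ {u | dist (γ s) (γ u) ≤ L * dist s u} from this ⟨hst, le_rfl⟩
  refine IsClosed.Icc_subset_of_forall_mem_nhdsWithin
    ((isClosed_le (by fun_prop) (by fun_prop)).inter isClosed_Icc) (by simp) ?_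
  rintro u ⟨hu, hsu, -⟩
  filter_upwards [nhdsWithin_le_nhds (h.eventually_dist_eq u), self_mem_nhdsWithin] with v hv huv
  calc dist (γ s) (γ v) ≤ dist (γ s) (γ u) + dist (γ u) (γ v) := dist_triangle _ _ _
    _ ≤ L * dist s u + L * dist u v := add_le_add hu hv.le
    _ = L * dist s v := by rw [← mul_add, dist_add_dist_of_le_of_le hsu huv.le]

lemma IsLocGeod.lipschitzWith (h : IsLocGeod γ L) : LipschitzWith L.toNNReal γ :=
  LipschitzWith.of_dist_le' h.dist_le

lemma IsLocGeod.dist_endpoints_le (h : IsLocGeod γ L) : dist (γ 0) (γ 1) ≤ L := by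
  simpa [Subtype.dist_eq] using h.dist_le 0 1

lemma IsLocGeod.isGeod_of_dist_eq (h : IsLocGeod γ L) (hL : dist (γ 0) (γ 1) = L) :
    IsGeod γ L := by
  suffices ∀ s t : I01, s ≤ t → dist (γ s) (γ t) = L * dist s t by
    refine ⟨h.1, fun s t => show dist (γ s) (γ t) = L * dist s t from ?_⟩
    rcases le_total s t with hst | hts
    · exact this s t hst
    · rw [dist_comm (γ s), dist_comm s, this t s hts]
  refine fun s t hst => (h.dist_le s t).antisymm ?_
  have hadd : dist 0 s + dist s t + dist t 1 = 1 := by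
    rw [dist_add_dist_of_le_of_le s.2.1 hst, dist_add_dist_of_le_of_le t.2.1 t.2.2]
    simp [Subtype.dist_eq]
  have htriangle := dist_triangle4 (γ 0) (γ s) (γ t) (γ 1)
  linear_combination htriangle - hL + h.dist_le 0 s + h.dist_le t 1 + L * hadd

end LocalGeodesics

section InitialSegments

/-- The initial segment `s ↦ γ (t * s)` of a path `γ`, that is, `γ` restricted to `[0, t]` and
reparametrized by `[0, 1]`. It is bundled as a continuous function of the truncation time `t`. -/
def initialSegment (γ : C(I01, X)) : C(I01, C(I01, X)) :=
  ContinuousMap.curry ⟨fun x : I01 × I01 => γ (x.1 * x.2), by fun_prop⟩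

variable {γ : C(I01, X)} {L : ℝ}

@[simp]
lemma initialSegment_apply (γ : C(I01, X)) (t s : I01) : initialSegment γ t s = γ (t * s) := rfl

lemma IsLocGeod.isLocGeod_initialSegment (h : IsLocGeod γ L) (t : I01) :
    IsLocGeod (initialSegment γ t) (L * t) := by
  have hscale (a b : I01) : |((t * a : I01) : ℝ) - (t * b : I01)| = t * |(a : ℝ) - b| := by
    rw [Icc.coe_mul, Icc.coe_mul, ← mul_sub, abs_mul, abs_of_nonneg t.2.1]
  have hcontract (a b : I01) : |((t * a : I01) : ℝ) - (t * b : I01)| ≤ |(a : ℝ) - b| :=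
    (hscale a b).trans_le (mul_le_of_le_one_left (abs_nonneg _) t.2.2)
  refine ⟨mul_nonneg h.1 t.2.1, fun u => ?_⟩
  obtain ⟨ε, hε, hγ⟩ := h.2 (t * u)
  refine ⟨ε, hε, fun s s' hs hs' => ?_⟩
  rw [initialSegment_apply, initialSegment_apply,
    hγ _ _ ((hcontract _ _).trans_lt hs) ((hcontract _ _).trans_lt hs'), hscale, mul_assoc]

end InitialSegments

section Compactness

lemma isCompact_setOf_lipschitzWith {K : Type*} [PseudoMetricSpace K] [ProperSpace X]
    (C : NNReal) (a : K) (p : X) : IsCompact {f : C(K, X) | LipschitzWith C f ∧ f a = p} := by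
  apply ArzelaAscoli.isCompact_of_equicontinuous
  · have himage : ContinuousMap.toFun '' {f : C(K, X) | LipschitzWith C f ∧ f a = p} =
        {f : K → X | LipschitzWith C f} ∩ {f | f a = p} := by
      ext f
      exact ⟨by rintro ⟨f, hf, rfl⟩; exact hf, fun hf => ⟨⟨f, hf.1.continuous⟩, hf, rfl⟩⟩
    rw [himage]
    refine (isCompact_univ_pi fun x => isCompact_closedBall p (C * dist x a)).of_isClosed_subset
      ((isClosed_setOfPred_lipschitzWith C).inter (isClosed_eq (by fun_prop) (by fun_prop))) ?_
    rintro f ⟨hf, rfl⟩ x -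
    exact hf.dist_le_mul x a
  · exact (LipschitzWith.uniformEquicontinuous _ C fun f => f.2.1).equicontinuous

lemma isClosed_setOf_isGeod : IsClosed {c : C(I01, X) | IsGeod c (dist (c 0) (c 1))} := by
  simp only [IsGeod, dist_nonneg, true_and, ofPred_forall]
  exact isClosed_iInter fun s => isClosed_iInter fun t => isClosed_eq (by fun_prop) (by fun_prop)

lemma isCompact_setOf_isGeod [ProperSpace X] (p : X) (M : ℝ) :
    IsCompact {c : C(I01, X) | c 0 = p ∧ ∃ L ≤ M, IsGeod c L} := by
  have hclosed : IsClosed {c : C(I01, X) | dist (c 0) (c 1) ≤ M} :=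
    isClosed_le (by fun_prop) (by fun_prop)
  convert (isCompact_setOf_lipschitzWith M.toNNReal (0 : I01) p).inter_right
    (isClosed_setOf_isGeod.inter hclosed) using 1
  ext c
  constructor
  · rintro ⟨hc0, L, hLM, hc⟩
    have hLip := hc.isLocGeod.lipschitzWith.weaken (Real.toNNReal_le_toNNReal hLM)
    obtain rfl := hc.dist_endpoints
    exact ⟨⟨hLip, hc0⟩, hc, hLM⟩
  · rintro ⟨⟨-, hc0⟩, hc, hM⟩
    exact ⟨hc0, _, hM, hc⟩

end Compactness

section Radii

variable {p : X} {c c' γ σ : C(I01, X)} {L L' Lγ Lσ : ℝ}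

lemma IsGeod.eq_of_lt_inj (hc : IsGeod c L) (hc' : IsGeod c' L') (hc0 : c 0 = p) (hc'0 : c' 0 = p)
    (hc1 : c 1 = c' 1) (hL : ENNReal.ofReal L < inj p) : c = c' := by
  by_contra hne
  have hcut : c 1 ∈ Cut p := ⟨c, c', L, L', hc, hc', hc0, rfl, hc'0, hc1.symm, hne⟩
  refine hL.not_ge ?_
  calc inj p ≤ edist p (c 1) := iInf₂_le _ hcut
    _ = ENNReal.ofReal L := by rw [edist_dist, ← hc0, hc.dist_endpoints]

lemma IsGeod.tendsto_of_tendsto_endpoint [ProperSpace X] {ι : Type*} {l : Filter ι}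
    {f : ι → C(I01, X)} {ℓ : ι → ℝ} (hc : IsGeod c L) (hc0 : c 0 = p)
    (hL : ENNReal.ofReal L < inj p) (hf : ∀ i, IsGeod (f i) (ℓ i)) (hf0 : ∀ i, f i 0 = p)
    (hlim : Tendsto (fun i => f i 1) l (𝓝 (c 1))) : Tendsto f l (𝓝 c) := by
  have hbounded : ∀ᶠ i in l, ℓ i ≤ dist p (c 1) + 1 := by
    filter_upwards [(tendsto_const_nhds.dist hlim).eventually_le_const (lt_add_one (dist p (c 1)))]
      with i hi
    rwa [← (hf i).dist_endpoints, hf0]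
  refine (isCompact_setOf_isGeod p (dist p (c 1) + 1)).tendsto_nhds_of_unique_mapClusterPt
    (hbounded.mono fun i hi => ⟨hf0 i, _, hi, hf i⟩) ?_
  rintro c' ⟨hc'0, L', -, hc'⟩ hcluster
  have heval : Continuous fun b : C(I01, X) => b 1 := by fun_prop
  have hend : c' 1 = c 1 :=
    eq_of_nhds_neBot (ClusterPt.mono (hcluster.tendsto_comp (heval.tendsto c')) hlim)
  exact (hc.eq_of_lt_inj hc' hc0 hc'0 hend.symm hL).symm

lemma IsLocGeod.mem_locGeodFrom (h : IsLocGeod γ L) (hγ0 : γ 0 = p) : γ ∈ LocGeodFrom p :=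
  ⟨⟨L, h⟩, hγ0⟩

lemma IsLocGeod.exists_injOn_endpt (h : IsLocGeod γ L) (hγ0 : γ 0 = p)
    (hL : ENNReal.ofReal L < conjRad p) : ∃ U ∈ 𝓝[LocGeodFrom p] γ, InjOn endpt U := by
  have hconj : ¬ ConjugateAlong p γ := fun hcon =>
    hL.not_ge (sInf_le ⟨γ, L, h, hγ0, hcon, rfl⟩)
  simp only [ConjugateAlong, not_and, not_not] at hconj
  obtain ⟨U, -, hU, hemb⟩ := hconj (h.mem_locGeodFrom hγ0)
  exact ⟨U, hU, injOn_iff_injective.2 hemb.injective⟩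

/-- Every point of the space is joined to `p` by a geodesic: `GeodesicSpace`, at one point. -/
def GeodesicFrom (p : X) : Prop :=
  ∀ x : X, ∃ (c : C(I01, X)) (L : ℝ), IsGeod c L ∧ c pt0 = p ∧ c pt1 = x

variable [ProperSpace X]

-- Choosing a geodesic from `p` to each `γ s` gives a family that converges, as `s → t`, to the same
-- limit as the initial segments of `γ`; the endpoint map is injective near that limit, so the two
-- families coincide.
lemma IsLocGeod.eventually_dist_eq_mul (hgeo : GeodesicFrom p) (h : IsLocGeod γ L)
    (hγ0 : γ 0 = p) {t : I01} (ht : dist p (γ t) = L * t)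
    (hL : ENNReal.ofReal (L * t) < min (inj p) (conjRad p)) :
    ∀ᶠ s in 𝓝 t, dist p (γ s) = L * s := by
  obtain ⟨hinj, hconj⟩ := lt_min_iff.1 hL
  have hseg0 (s : I01) : initialSegment γ s 0 = p := by simp [hγ0]
  have hseg1 (s : I01) : initialSegment γ s 1 = γ s := by simp
  have hseg (s : I01) := h.isLocGeod_initialSegment s
  choose f ℓ hf hf0 hf1 using fun s : I01 => hgeo (γ s)
  have hgeod : IsGeod (initialSegment γ t) (L * t) :=
    (hseg t).isGeod_of_dist_eq (by rw [hseg0, hseg1, ht])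
  have hf_tendsto : Tendsto f (𝓝 t) (𝓝 (initialSegment γ t)) := by
    refine hgeod.tendsto_of_tendsto_endpoint (hseg0 t) hinj hf hf0 ?_
    rw [hseg1]
    exact (γ.continuous.tendsto t).congr fun s => (hf1 s).symm
  obtain ⟨U, hU, hUinj⟩ := (hseg t).exists_injOn_endpt (hseg0 t) hconj
  have hfU : ∀ᶠ s in 𝓝 t, f s ∈ U :=
    tendsto_nhdsWithin_iff.2
      ⟨hf_tendsto, .of_forall fun s => (hf s).isLocGeod.mem_locGeodFrom (hf0 s)⟩ hU
  have hsegU : ∀ᶠ s in 𝓝 t, initialSegment γ s ∈ U :=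
    tendsto_nhdsWithin_iff.2
      ⟨(initialSegment γ).continuous.tendsto t,
        .of_forall fun s => (hseg s).mem_locGeodFrom (hseg0 s)⟩ hU
  filter_upwards [hfU, hsegU] with s hfs hsegs
  have heq : f s = initialSegment γ s := hUinj hfs hsegs ((hf1 s).trans (hseg1 s).symm)
  have hs : IsGeod (initialSegment γ s) (ℓ s) := heq ▸ hf s
  rw [← hs.isLocGeod.length_unique (hseg s), ← hs.dist_endpoints, hseg0, hseg1]

lemma IsLocGeod.isGeod_of_lt (hgeo : GeodesicFrom p) (h : IsLocGeod γ L) (hγ0 : γ 0 = p)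
    (hL : ENNReal.ofReal L < min (inj p) (conjRad p)) : IsGeod γ L := by
  have hopen : IsOpen {t : I01 | dist p (γ t) = L * t} :=
    isOpen_iff_mem_nhds.2 fun t ht => h.eventually_dist_eq_mul hgeo hγ0 ht <|
      (ENNReal.ofReal_le_ofReal (mul_le_of_le_one_right h.1 t.2.2)).trans_lt hL
  have hclosed : IsClosed {t : I01 | dist p (γ t) = L * t} :=
    isClosed_eq (by fun_prop) (by fun_prop)
  have huniv : {t : I01 | dist p (γ t) = L * t} = univ :=
    IsClopen.eq_univ ⟨hclosed, hopen⟩ ⟨0, by simp [hγ0]⟩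
  have h1 : dist p (γ 1) = L * (1 : I01) := huniv.ge (mem_univ 1)
  exact h.isGeod_of_dist_eq (by rw [hγ0, h1, Icc.coe_one, mul_one])

lemma IsLocGeod.two_mul_sub_le_dist (hgeo : GeodesicFrom p) (h : IsLocGeod γ L) (hγ0 : γ 0 = p)
    {R : ℝ} (hR : 0 ≤ R) (hRL : R ≤ L) (hRlt : ENNReal.ofReal R < min (inj p) (conjRad p)) :
    2 * R - L ≤ dist p (γ 1) := by
  obtain ⟨t, ht⟩ : ∃ t : I01, L * t = R := by
    rcases h.1.eq_or_lt with rfl | hpos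
    · exact ⟨0, by simpa using hR.antisymm hRL⟩
    · exact ⟨⟨R / L, by positivity, (div_le_one hpos).2 hRL⟩, mul_div_cancel₀ R hpos.ne'⟩
  have hseg : IsGeod (initialSegment γ t) (L * t) :=
    (h.isLocGeod_initialSegment t).isGeod_of_lt hgeo (by simp [hγ0]) (by rwa [ht])
  have hstart : dist p (γ t) = R := by simpa [hγ0, ht] using hseg.dist_endpoints
  have hrest : dist (γ t) (γ 1) ≤ L - R := by
    calc dist (γ t) (γ 1) ≤ L * dist t 1 := h.dist_le t 1
      _ = L * (1 - t) := by
        rw [dist_comm, Subtype.dist_eq, Real.dist_eq, Icc.coe_one,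
          abs_of_nonneg (sub_nonneg.2 t.2.2)]
      _ = L - R := by rw [mul_sub, mul_one, ht]
  linarith [dist_triangle_right p (γ t) (γ 1)]

lemma IsLocGeod.isGeod_of_average_lt (hgeo : GeodesicFrom p) (h : IsLocGeod γ L) (hγ0 : γ 0 = p)
    (hlt : ENNReal.ofReal ((dist p (γ 1) + L) / 2) < min (inj p) (conjRad p)) : IsGeod γ L := by
  refine h.isGeod_of_dist_eq (h.dist_endpoints_le.antisymm (le_of_not_gt fun hshort => ?_))
  rw [hγ0] at hshort
  obtain ⟨r, hr0, hr, hrlt⟩ := ENNReal.lt_iff_exists_real_btwn.1 hlt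
  have hr' : (dist p (γ 1) + L) / 2 < r := (ENNReal.ofReal_lt_ofReal_iff'.1 hr).1
  have hmin : 2 * min r L - L ≤ dist p (γ 1) :=
    h.two_mul_sub_le_dist hgeo hγ0 (le_min hr0 h.1) (min_le_right r L)
      ((ENNReal.ofReal_le_ofReal (min_le_left r L)).trans_lt hrlt)
  have : (dist p (γ 1) + L) / 2 < min r L := lt_min hr' (by linarith)
  linarith

lemma IsLocGeod.eq_of_average_lt (hgeo : GeodesicFrom p) (hγ : IsLocGeod γ Lγ)
    (hσ : IsLocGeod σ Lσ) (hγ0 : γ 0 = p) (hσ0 : σ 0 = p) (h1 : γ 1 = σ 1)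
    (hlt : ENNReal.ofReal ((Lγ + Lσ) / 2) < min (inj p) (conjRad p)) : γ = σ := by
  have hdγ : dist p (γ 1) ≤ Lγ := hγ0 ▸ hγ.dist_endpoints_le
  have hdσ : dist p (γ 1) ≤ Lσ := by simpa [hσ0, h1] using hσ.dist_endpoints_le
  have hγgeod : IsGeod γ Lγ := hγ.isGeod_of_average_lt hgeo hγ0 <|
    (ENNReal.ofReal_le_ofReal (by linarith)).trans_lt hlt
  have hσgeod : IsGeod σ Lσ := hσ.isGeod_of_average_lt hgeo hσ0 <|
    (ENNReal.ofReal_le_ofReal (by rw [← h1]; linarith)).trans_lt hlt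
  have hlength : Lγ = Lσ := by
    rw [← hγgeod.dist_endpoints, ← hσgeod.dist_endpoints, hγ0, hσ0, h1]
  refine hγgeod.eq_of_lt_inj hσgeod hγ0 hσ0 h1 ?_
  rw [← hlength, add_self_div_two] at hlt
  exact hlt.trans_le (min_le_left _ _)

end Radii

theorem inj_le_half_sum_lengths_general [ProperSpace X] {p : X} (hgeo : GeodesicFrom p)
    {γ σ : C(I01, X)} {Lγ Lσ : ℝ} (hγ : IsLocGeod γ Lγ) (hσ : IsLocGeod σ Lσ)
    (hγ0 : γ 0 = p) (hσ0 : σ 0 = p) (h1 : γ 1 = σ 1) (hne : γ ≠ σ)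
    (h : inj p < conjRad p ∨ ENNReal.ofReal ((Lγ + Lσ) / 2) < conjRad p) :
    inj p ≤ ENNReal.ofReal ((Lγ + Lσ) / 2) := by
  by_contra! hlt
  exact hne (hγ.eq_of_average_lt hgeo hσ hγ0 hσ0 h1 (lt_min hlt (h.elim hlt.trans id)))

/-- In a proper geodesic metric space, if `γ` and `σ` are two distinct local
geodesics joining `p` to `q`, and `inj p < conj X` or `(L γ + L σ)/2 < conj X`, then
`inj p ≤ (L γ + L σ)/2`. -/
theorem inj_le_half_sum_lengths {X : Type*} [MetricSpace X] [ProperSpace X]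
    (hgeo : GeodesicSpace X) (p q : X) (γ σ : C(I01, X)) (Lγ Lσ : ℝ)
    (hγ : IsLocGeod γ Lγ) (hσ : IsLocGeod σ Lσ)
    (hγ0 : γ pt0 = p) (hγ1 : γ pt1 = q) (hσ0 : σ pt0 = p) (hσ1 : σ pt1 = q) (hne : γ ≠ σ)
    (h : inj p < conjSpace X ∨ ENNReal.ofReal ((Lγ + Lσ) / 2) < conjSpace X) :
    inj p ≤ ENNReal.ofReal ((Lγ + Lσ) / 2) :=
  inj_le_half_sum_lengths_general (hgeo p) hγ hσ hγ0 hσ0 (hγ1.trans hσ1.symm) hne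
    (h.imp (·.trans_le (iInf_le _ p)) (·.trans_le (iInf_le _ p)))

end InjSoul
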